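/- Bandit online distributed composite mirror descent (Theorem 2): In the BanODCMD setting described in the context, for every node j ∈ {1,…,m} and every comparator x★ ∈ K, the expected average regularized regret satisfies E[ (1/T) Σ_{t=1}^{T} Σ_{i=1}^{m} ( ℓ_{i,t}(x_{j,t}) + r(x_{j,t}) − ℓ_{i,t}(x★) − r(x★) ) ] ≤ B_0/T + B_1/(η T) + B_2 η + (B_3/T) Σ_{t=1}^{T} √(η ρ_t) + (B_4/T) Σ_{t=1}^{T} √(ρ_t/η) + B_5 δ + B_6 ξ, where B_0 = (2θ/(1−κ)) (G_ℓ + G_r) Σ_{i=1}^{m} N(x_{i,1}), B_1 = Σ_{i=1}^{m} V_ω( (1−ξ) x★, x_{i,1} ), B_2 = (m/σ_ω) ( (p̄ p̄_* d G_ℓ)²/2 + G_r ( p̄ p̄_* d G_ℓ + G_r ) + (2θ/(1−κ)) (G_ℓ + G_r) ( p̄ p̄_* d G_ℓ + G_r ) ), B_3 = m √(2/σ_ω) ( p̄ p̄_* d G_ℓ + (2θ/(1−κ)) (G_ℓ + G_r) ), B_4 = 4 m √(2/σ_ω) p̄ G_ω R̄, B_5 = 2 m G_ℓ, and B_6 =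 m p̄ (G_ℓ + G_r) R̄. -/

import Mathlib

open MeasureTheory
open scoped RealInnerProductSpace Pointwise ProbabilityTheory

/-- Euclidean space `ℝ^d` with the Euclidean inner product and Euclidean norm. -/
abbrev Euc (d : ℕ) := EuclideanSpace ℝ (Fin d)

/-- The dual norm of `N`: `N_*(g) = sup {⟪g, x⟫ : N x ≤ 1}`. -/
noncomputable def dualNorm (d : ℕ) (N : Euc d → ℝ) (g : Euc d) : ℝ :=
  sSup ((fun x => ⟪g, x⟫) '' {x : Euc d | N x ≤ 1})

/-- The backward product `P(t,τ) = W(t) W(t-1) ⋯ W(τ)` of a sequence of matrices. -/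
noncomputable def backProd {m : ℕ} (W : ℕ → Matrix (Fin m) (Fin m) ℝ) (t τ : ℕ) :
    Matrix (Fin m) (Fin m) ℝ :=
  ((List.range (t + 1 - τ)).map fun k => W (t - k)).prod


section
open ProbabilityTheory
theorem aux_dual {d : ℕ} (N : Euc d → ℝ)
    (hN_add : ∀ x y, N (x + y) ≤ N x + N y)
    (hN_smul : ∀ (c : ℝ) (x : Euc d), N (c • x) = |c| * N x)
    (hN_pos : ∀ x : Euc d, x ≠ 0 → 0 < N x)
    (pb : ℝ) (hNle : ∀ x : Euc d, N x ≤ pb * ‖x‖) (g x : Euc d) :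
    ⟪g, x⟫ ≤ dualNorm d N g * N x := by
  have N0 : N 0 = 0 := by simpa using hN_smul 0 0
  by_cases hx : x = 0
  · simp [hx, N0]
  have hcont : Continuous N := by
    have : LipschitzWith (Real.toNNReal pb) N := by
      apply LipschitzWith.of_le_add_mul
      intro a b
      have h1 := hN_add b (a - b)
      have h2 := hNle (a - b)
      have h3 : pb * ‖a - b‖ ≤ (Real.toNNReal pb) * dist a b := by
        rw [dist_eq_norm]
        gcongr
        exact Real.le_coe_toNNReal pb
      rw [add_sub_cancel] at h1
      linarith
    exact this.continuous
  have hdim : (‖x‖⁻¹ • x) ∈ Metric.sphere (0 : Euc d) 1 := by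
    simp [norm_smul, norm_ne_zero_iff.mpr hx]
  obtain ⟨a, ha, hmin⟩ := (isCompact_sphere (0 : Euc d) 1).exists_isMinOn ⟨_, hdim⟩ hcont.continuousOn
  have ha0 : a ≠ 0 := by
    rintro rfl
    simp at ha
  have hc := hN_pos a ha0
  have hlow : ∀ v : Euc d, N a * ‖v‖ ≤ N v := by
    intro v
    by_cases hv : v = 0
    · simp [hv, N0]
    have hvn : 0 < ‖v‖ := norm_pos_iff.mpr hv
    have h1 : (‖v‖⁻¹ • v) ∈ Metric.sphere (0 : Euc d) 1 := by
      simp [norm_smul, hvn.ne']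
    have h2 : N a ≤ N (‖v‖⁻¹ • v) := hmin h1
    rw [hN_smul, abs_of_pos (by positivity)] at h2
    calc N a * ‖v‖ ≤ (‖v‖⁻¹ * N v) * ‖v‖ := by gcongr
      _ = N v := by field_simp
  have hbdd : BddAbove ((fun x => ⟪g, x⟫) '' {x : Euc d | N x ≤ 1}) := by
    refine ⟨‖g‖ * (1 / N a), ?_⟩
    rintro _ ⟨v, hv, rfl⟩
    refine (real_inner_le_norm g v).trans ?_
    gcongr
    rw [le_div_iff₀ hc, mul_comm]
    exact (hlow v).trans hv
  have hNx := hN_pos x hx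
  have : ⟪g, (N x)⁻¹ • x⟫ ≤ dualNorm d N g := by
    apply le_csSup hbdd
    refine ⟨_, ?_, rfl⟩
    simp only [Set.mem_ofPred_eq, hN_smul]
    rw [abs_of_pos (by positivity), inv_mul_cancel₀ hNx.ne']
  rw [inner_smul_right, inv_mul_le_iff₀ hNx] at this
  linarith

theorem aux_inv {d : ℕ} (μ : Measure (Euc d)) 
    (hμinv : ∀ R : Euc d ≃ₗᵢ[ℝ] Euc d, μ.map (⇑R) = μ) (R : Euc d ≃ₗᵢ[ℝ] Euc d) (f : Euc d → ℝ) :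
    ∫ v, f (R v) ∂μ = ∫ v, f v ∂μ := by
  conv_rhs => rw [← hμinv R]
  exact (integral_map_equiv R.toHomeomorph.toMeasurableEquiv f).symm

theorem aux_moment {d : ℕ} (hd : 1 ≤ d) (μ : Measure (Euc d)) (hμ : IsProbabilityMeasure μ)
    (hμsphere : μ {v : Euc d | ‖v‖ = 1}ᶜ = 0)
    (hμinv : ∀ R : Euc d ≃ₗᵢ[ℝ] Euc d, μ.map (⇑R) = μ) (w : Euc d) :
    ∫ v, ⟪w, v⟫ ^ 2 ∂μ = ‖w‖ ^ 2 / d := by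
  have hae : ∀ᵐ v ∂μ, ‖v‖ = 1 := hμsphere
  have key : ∀ k : Fin d, ∫ v, ⟪‖w‖ • EuclideanSpace.basisFun (Fin d) ℝ k, v⟫ ^ 2 ∂μ
      = ∫ v, ⟪w, v⟫ ^ 2 ∂μ := by
    intro k
    set b := ‖w‖ • EuclideanSpace.basisFun (Fin d) ℝ k with hb
    have hn : ‖b‖ = ‖w‖ := by simp [hb, norm_smul]
    have hr := Submodule.reflection_sub hn
    rw [← aux_inv μ hμinv ((ℝ ∙ (b - w))ᗮ.reflection)]
    congr 1
    ext v
    have h2 := LinearIsometryEquiv.inner_map_map ((ℝ ∙ (b - w))ᗮ.reflection) b ((ℝ ∙ (b - w))ᗮ.reflection v)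
    rw [hr, Submodule.reflection_reflection] at h2
    rw [h2]
  have hint : ∀ a : Euc d, Integrable (fun v => ⟪a, v⟫ ^ 2) μ := by
    intro a
    refine Integrable.of_bound (C := ‖a‖ ^ 2) (by fun_prop) ?_
    filter_upwards [hae] with v hv
    rw [norm_pow, Real.norm_eq_abs]
    have := abs_real_inner_le_norm a v
    rw [hv, mul_one] at this
    gcongr
  have hsum : ∑ k : Fin d, ∫ v, ⟪‖w‖ • EuclideanSpace.basisFun (Fin d) ℝ k, v⟫ ^ 2 ∂μ = ‖w‖ ^ 2 := by
    rw [← integral_finsetSum _ (fun k _ => hint _)]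
    have : ∀ᵐ v ∂μ, ∑ k : Fin d, ⟪‖w‖ • EuclideanSpace.basisFun (Fin d) ℝ k, v⟫ ^ 2 = ‖w‖ ^ 2 := by
      filter_upwards [hae] with v hv
      have h1 := (EuclideanSpace.basisFun (Fin d) ℝ).sum_sq_norm_inner_right v
      simp only [inner_smul_left, mul_pow, ← Finset.mul_sum]
      simp only [Real.norm_eq_abs, sq_abs] at h1
      rw [h1, hv]; simp
    rw [integral_congr_ae this]; simp
  simp only [key] at hsum
  simp only [Finset.sum_const, Finset.card_univ, Fintype.card_fin, nsmul_eq_mul] at hsum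
  have : (0 : ℝ) < d := by exact_mod_cast hd
  rw [← hsum]; field_simp
end

theorem aux_line {d : ℕ} (f : Euc d → ℝ) (hf : ConvexOn ℝ Set.univ f) (p w : Euc d) (a : ℝ)
    (ha : 0 ≤ a) : a * (f p - f (p - w)) ≤ f (p + a • w) - f p := by
  have h1a : 0 < 1 + a := by linarith
  have h := hf.2 (Set.mem_univ (p + a • w)) (Set.mem_univ (p - w))
    (show 0 ≤ 1 / (1 + a) by positivity) (show 0 ≤ a / (1 + a) by positivity)
    (by field_simp)
  have he : (1 / (1 + a)) • (p + a • w) + (a / (1 + a)) • (p - w) = p := by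
    have : (1 / (1 + a)) + (a / (1 + a)) = 1 := by field_simp
    calc _ = ((1 / (1 + a)) + (a / (1 + a))) • p + ((1 / (1 + a)) * a - a / (1 + a)) • w := by module
      _ = p := by
        rw [this]
        have : (1 / (1 + a)) * a - a / (1 + a) = 0 := by ring
        rw [this]; simp
  rw [he] at h
  simp only [smul_eq_mul] at h
  have h2 : (1 + a) * f p ≤ f (p + a • w) + a * f (p - w) := by
    calc (1 + a) * f p ≤ (1 + a) * (1 / (1 + a) * f (p + a • w) + a / (1 + a) * f (p - w)) := by gcongr
      _ = _ := by field_simp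
  linarith

theorem aux_smooth {d : ℕ} (hd : 1 ≤ d) (μ : Measure (Euc d)) (hμ : IsProbabilityMeasure μ)
    (hμsphere : μ {v : Euc d | ‖v‖ = 1}ᶜ = 0)
    (hμinv : ∀ R : Euc d ≃ₗᵢ[ℝ] Euc d, μ.map (⇑R) = μ)
    (f : Euc d → ℝ) (hf : ConvexOn ℝ Set.univ f) (hfc : Continuous f)
    (K : Set (Euc d)) (G δ : ℝ) (hδ : 0 < δ)
    (hlip : ∀ x ∈ K, ∀ y ∈ K, |f x - f y| ≤ G * ‖x - y‖)
    (x z : Euc d) (hG : 0 ≤ G)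
    (hx : ∀ v : Euc d, ‖v‖ ≤ 1 → x + δ • v ∈ K)
    (hz : ∀ v : Euc d, ‖v‖ ≤ 1 → z + δ • v ∈ K) :
    f x - f z - 2 * δ * G ≤
      ∫ v, ⟪((d : ℝ) / (2 * δ) * (f (x + δ • v) - f (x - δ • v))) • v, x - z⟫ ∂μ := by
  have hae : ∀ᵐ v ∂μ, ‖v‖ = 1 := hμsphere
  have hd0 : (0 : ℝ) < d := by exact_mod_cast hd
  by_cases hw : x - z = 0
  · have : x = z := sub_eq_zero.mp hw
    simp [this]; positivity
  set w := x - z with hwdef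
  have hwn : 0 < ‖w‖ := norm_pos_iff.mpr hw
  set A : Euc d → ℝ := fun v => (f (x + δ • v) - f (x - δ • v)) * ⟪w, v⟫ with hA
  have hI : ∫ v, ⟪((d : ℝ) / (2 * δ) * (f (x + δ • v) - f (x - δ • v))) • v, w⟫ ∂μ
      = (d : ℝ) / (2 * δ) * ∫ v, A v ∂μ := by
    rw [← integral_const_mul]
    congr 1; ext v
    rw [inner_smul_left, real_inner_comm]
    simp [hA]; ring
  rw [hI]
  have hxK : x ∈ K := by simpa using hx 0 (by simp)
  have hzK : z ∈ K := by simpa using hz 0 (by simp)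
  set Δ := f x - f z - 2 * δ * G with hΔ
  have hdiff : ∀ v : Euc d, ‖v‖ ≤ 1 → Δ ≤ f (x + δ • v) - f (z + δ • v) := by
    intro v hv
    have h1 := (abs_le.mp (hlip _ (hx v hv) _ hxK)).1
    have h2 := (abs_le.mp (hlip _ (hz v hv) _ hzK)).2
    simp only [add_sub_cancel_left, norm_smul, Real.norm_eq_abs, abs_of_pos hδ] at h1 h2
    have h3 : G * (δ * ‖v‖) ≤ G * (δ * 1) := by gcongr
    linarith
  have hxm : ∀ v : Euc d, ‖v‖ ≤ 1 → x - δ • v ∈ K := by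
    intro v hv
    have := hx (-v) (by simpa using hv)
    simpa [sub_eq_add_neg] using this
  set R := (ℝ ∙ w)ᗮ.reflection with hR
  have hRv : ∀ v, R v = v - (2 * (⟪w, v⟫ / ‖w‖ ^ 2)) • w := by
    intro v
    rw [hR, Submodule.reflection_orthogonal_apply, Submodule.reflection_singleton_apply]
    simp
    module
  have hstep : ∀ v v' : Euc d, ∀ c : ℝ, ‖v‖ ≤ 1 → ‖v'‖ ≤ 1 → v = v' + (2 * c) • w →
      2 * δ * c ^ 2 * Δ ≤ c * (f (x + δ • v) - f (x + δ • v')) := by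
    have base : ∀ v v' : Euc d, ∀ c : ℝ, 0 ≤ c → ‖v'‖ ≤ 1 → v = v' + (2 * c) • w →
      2 * δ * c ^ 2 * Δ ≤ c * (f (x + δ • v) - f (x + δ • v')) := by
      intro v v' c hc hv' hvv
      have h1 := aux_line f hf (x + δ • v') w (2 * δ * c) (by positivity)
      have e1 : x + δ • v' + (2 * δ * c) • w = x + δ • v := by rw [hvv]; module
      have e2 : x + δ • v' - w = z + δ • v' := by rw [hwdef]; abel
      rw [e1, e2] at h1
      have h2 := hdiff v' hv'
      calc 2 * δ * c ^ 2 * Δ = c * (2 * δ * c * Δ) := by ring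
        _ ≤ c * (2 * δ * c * (f (x + δ • v') - f (z + δ • v'))) := by gcongr
        _ ≤ _ := by gcongr
    intro v v' c hv hv' hvv
    rcases le_total 0 c with hc | hc
    · exact base v v' c hc hv' hvv
    · have := base v' v (-c) (by linarith) hv (by rw [hvv]; module)
      linarith
  have hpt : ∀ v : Euc d, ‖v‖ = 1 → 4 * δ * Δ / ‖w‖ ^ 2 * ⟪w, v⟫ ^ 2 ≤ A v + A (R v) := by
    intro v hv
    have hRn : ‖R v‖ = 1 := by rw [LinearIsometryEquiv.norm_map, hv]
    set c := ⟪w, v⟫ / ‖w‖ ^ 2 with hc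
    have hcw : ⟪w, v⟫ = c * ‖w‖ ^ 2 := by rw [hc]; field_simp
    have hRw : ⟪w, R v⟫ = - ⟪w, v⟫ := by
      rw [hRv, inner_sub_right, inner_smul_right, real_inner_self_eq_norm_sq, ← hc, hcw]; ring
    have h1 := hstep v (R v) c hv.le hRn.le (by rw [hRv]; module)
    have h2 := hstep (- R v) (- v) c (by simp [hRn]) (by simp [hv]) (by rw [hRv]; module)
    simp only [smul_neg, ← sub_eq_add_neg] at h2
    have h3 : 4 * δ * c ^ 2 * Δ ≤ c * (f (x + δ • v) - f (x + δ • R v)) + c * (f (x - δ • R v) - f (x - δ • v)) := by linarith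
    have h4 := mul_le_mul_of_nonneg_right h3 (sq_nonneg ‖w‖)
    simp only [hA, hRw]
    rw [hcw]
    have e : 4 * δ * Δ / ‖w‖ ^ 2 * (c * ‖w‖ ^ 2) ^ 2 = 4 * δ * c ^ 2 * Δ * ‖w‖ ^ 2 := by
      field_simp
    rw [e]
    linarith
  have hAint : Integrable A μ := by
    refine Integrable.of_bound (C := G * (2 * δ) * ‖w‖) (by fun_prop) ?_
    filter_upwards [hae] with v hv
    have h1 := hlip _ (hx v hv.le) _ (hxm v hv.le)
    have h2 := abs_real_inner_le_norm w v
    rw [hv, mul_one] at h2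
    have e : x + δ • v - (x - δ • v) = (2 * δ) • v := by module
    rw [e, norm_smul, hv, Real.norm_eq_abs, abs_of_pos (show (0:ℝ) < 2 * δ by positivity), mul_one] at h1
    simp only [hA, norm_mul, Real.norm_eq_abs]
    gcongr
  have hARint : Integrable (fun v => A (R v)) μ := by
    have : Integrable A (μ.map R) := by rw [hμinv R]; exact hAint
    exact this.comp_measurable R.continuous.measurable
  have hsq : Integrable (fun v => 4 * δ * Δ / ‖w‖ ^ 2 * ⟪w, v⟫ ^ 2) μ := by
    apply Integrable.const_mul
    refine Integrable.of_bound (C := ‖w‖ ^ 2) (by fun_prop) ?_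
    filter_upwards [hae] with v hv
    rw [norm_pow, Real.norm_eq_abs]
    have := abs_real_inner_le_norm w v
    rw [hv, mul_one] at this
    gcongr
  have hfin : 4 * δ * Δ / ‖w‖ ^ 2 * (‖w‖ ^ 2 / d) ≤ 2 * ∫ v, A v ∂μ := by
    rw [← aux_moment hd μ hμ hμsphere hμinv w, ← integral_const_mul]
    calc _ ≤ ∫ v, (A v + A (R v)) ∂μ := by
          apply integral_mono_ae hsq (hAint.add hARint)
          filter_upwards [hae] with v hv using hpt v hv
      _ = _ := by
          rw [integral_add hAint hARint, aux_inv μ hμinv R A]; ring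
  calc Δ = (d : ℝ) / (2 * δ) * ((4 * δ * Δ / ‖w‖ ^ 2 * (‖w‖ ^ 2 / d)) / 2) := by
        field_simp; ring
    _ ≤ (d : ℝ) / (2 * δ) * ∫ v, A v ∂μ := by
        gcongr; linarith

theorem aux_prox {d : ℕ} (N : Euc d → ℝ)
    (hN_add : ∀ x y, N (x + y) ≤ N x + N y)
    (hN_neg : ∀ x, N (-x) = N x)
    (hN_nn : ∀ x, 0 ≤ N x)
    (hdual : ∀ g x : Euc d, ⟪g, x⟫ ≤ dualNorm d N g * N x)
    (K C : Set (Euc d)) (hCconv : Convex ℝ C) (hCK : closure C ⊆ K)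
    (hCc : IsCompact (closure C))
    (φ : Euc d → ℝ) (φ' : Euc d → Euc d)
    (hgrad : ∀ x, HasGradientAt φ (φ' x) x)
    (V : Euc d → Euc d → ℝ)
    (hV : ∀ x y, V x y = φ x - φ y - ⟪φ' y, x - y⟫)
    (σω : ℝ) (hσ : 0 < σω)
    (hstrong : ∀ x ∈ K, ∀ y ∈ K, φ x ≥ φ y + ⟪φ' y, x - y⟫ + σω / 2 * N (x - y) ^ 2)
    (Gω : ℝ) (hGω : 0 ≤ Gω)
    (hφlip : ∀ x ∈ K, ∀ y ∈ K, dualNorm d N (φ' x - φ' y) ≤ Gω * N (x - y))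
    (r : Euc d → ℝ) (Gr : ℝ) (hGr : 0 ≤ Gr)
    (hrconv : ConvexOn ℝ Set.univ r)
    (hrlip : ∀ x ∈ K, ∀ y ∈ K, |r x - r y| ≤ Gr * N (x - y))
    (η : ℝ) (hη : 0 < η) (ρ : ℝ) (hρ : 0 ≤ ρ) (D : ℝ) (hD : 0 ≤ D)
    (Rd : ℝ) (hRd : ∀ x ∈ K, ∀ y ∈ K, N (x - y) ≤ Rd)
    (g x y : Euc d) (hg : dualNorm d N g ≤ D) (hx : x ∈ C) (hy : y ∈ C)
    (happ : ∀ z ∈ C, ⟪g, y⟫ + r y + 1 / η * V y x ≤ ⟪g, z⟫ + r z + 1 / η * V z x + ρ) :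
    N (y - x) ≤ √(2 / σω) * √(η * ρ) + η * (D + Gr) / σω ∧
    ∀ z ∈ C, ⟪g, x - z⟫ + r x - r z ≤ 1 / η * (V z x - V z y) + η * (D + Gr) ^ 2 / (2 * σω)
      + Rd * Gω * √(2 / σω) * √(ρ / η) := by
  have hrc : Continuous r := hrconv.locallyLipschitz.continuous
  have hφc : Continuous φ := continuous_iff_continuousAt.mpr fun v => (hgrad v).continuousAt
  have hVc : Continuous (fun z => V z x) := by
    simp only [hV]; fun_prop
  have hFc : Continuous (fun z => ⟪g, z⟫ + r z + 1 / η * V z x) := by fun_prop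
  have hCsub : C ⊆ closure C := subset_closure
  obtain ⟨s, hs, hmin⟩ := hCc.exists_isMinOn ⟨x, hCsub hx⟩ hFc.continuousOn
  have happ' : ⟪g, y⟫ + r y + 1 / η * V y x ≤ ⟪g, s⟫ + r s + 1 / η * V s x + ρ := by
    have hcl : IsClosed {z | ⟪g, y⟫ + r y + 1 / η * V y x ≤ ⟪g, z⟫ + r z + 1 / η * V z x + ρ} :=
      isClosed_le continuous_const (hFc.add continuous_const)
    exact closure_minimal (fun z hz => happ z hz) hcl hs
  have hopt : ∀ z ∈ closure C, ⟪g, s - z⟫ + r s - r z ≤ 1 / η * ⟪φ' s - φ' x, z - s⟫ := by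
    intro z hz
    have hderiv : HasDerivAt (fun l : ℝ => φ (s + l • (z - s))) ⟪φ' s, z - s⟫ 0 := by
      have h1 : HasDerivAt (fun l : ℝ => s + l • (z - s)) (z - s) 0 := by
        simpa using ((hasDerivAt_id (0 : ℝ)).smul_const (z - s)).const_add s
      have h2 := (hgrad s).hasFDerivAt
      have h3 : HasFDerivAt φ ((InnerProductSpace.toDual ℝ (Euc d)) (φ' s)) (s + (0 : ℝ) • (z - s)) := by
        simpa using h2
      have h4 := h3.comp_hasDerivAt (0 : ℝ) h1
      rw [InnerProductSpace.toDual_apply_apply] at h4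
      exact h4
    have hslope := hderiv.tendsto_slope_zero_right
    have hge : ∀ᶠ l in nhdsWithin (0 : ℝ) (Set.Ioi 0),
        η * (⟪g, s - z⟫ + r s - r z) + ⟪φ' x, z - s⟫ ≤
          l⁻¹ • (φ (s + (0 + l) • (z - s)) - φ (s + (0 : ℝ) • (z - s))) := by
      filter_upwards [Ioo_mem_nhdsGT (show (0 : ℝ) < 1 by norm_num)] with l hl
      have hmem : s + l • (z - s) ∈ closure C :=
        hCconv.closure.add_smul_sub_mem hs hz ⟨hl.1.le, hl.2.le⟩
      have h1 := hmin hmem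
      simp only [Set.mem_ofPred_eq] at h1
      have h2 := hrconv.2 (Set.mem_univ s) (Set.mem_univ z) (show 0 ≤ 1 - l by linarith [hl.2]) hl.1.le (by ring)
      have e : (1 - l) • s + l • z = s + l • (z - s) := by module
      rw [e] at h2
      simp only [smul_eq_mul] at h2
      rw [hV, hV] at h1
      simp only [zero_add, zero_smul, add_zero, smul_eq_mul]
      rw [inv_mul_eq_div, le_div_iff₀ hl.1]
      simp only [inner_add_right, inner_sub_right, inner_smul_right] at h1 ⊢
      have h3 := mul_le_mul_of_nonneg_left (h1.trans (add_le_add_left (add_le_add_right h2 _) _)) hη.le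
      have hηi : η * (1 / η) = 1 := by field_simp
      simp only [mul_add, ← mul_assoc, hηi] at h3
      linarith
    have hlim := ge_of_tendsto hslope hge
    rw [inner_sub_left]
    rw [one_div_mul_eq_div, le_div_iff₀ hη]
    linarith
  have hsK := hCK hs
  have hyK := hCK (hCsub hy)
  have hxK := hCK (hCsub hx)
  -- closeness of y to s
  have hys : N (y - s) ≤ √(2 / σω) * √(η * ρ) := by
    have h1 := hopt y (hCsub hy)
    have h2 := hstrong y hyK s hsK
    rw [hV, hV] at happ'
    have hηi : η * (1 / η) = 1 := by field_simp
    have h3 := mul_le_mul_of_nonneg_left h1 hη.le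
    have h4 := mul_le_mul_of_nonneg_left happ' hη.le
    simp only [inner_sub_left, inner_sub_right] at h2 h3 h4
    simp only [mul_add, mul_sub, ← mul_assoc, hηi] at h3 h4
    rw [← Real.sqrt_mul (by positivity)]
    apply Real.le_sqrt_of_sq_le
    have h5 : σω / 2 * N (y - s) ^ 2 ≤ η * ρ := by linarith
    calc N (y - s) ^ 2 = 2 / σω * (σω / 2 * N (y - s) ^ 2) := by field_simp
      _ ≤ _ := by gcongr
  have hsym : N (s - x) = N (x - s) := by rw [← hN_neg]; simp
  have hsx1 : ⟪g, x - s⟫ + r x - r s ≤ (D + Gr) * N (x - s) := by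
    have h1 := hdual g (x - s)
    have h2 : dualNorm d N g * N (x - s) ≤ D * N (x - s) := by
      gcongr
      exact hN_nn _
    have h3 := (abs_le.mp (hrlip x hxK s hsK)).2
    linarith
  have hsx : N (s - x) ≤ η * (D + Gr) / σω := by
    have h1 := hopt x (hCsub hx)
    have h2 := hstrong x hxK s hsK
    have h3 := hstrong s hsK x hxK
    rw [hsym] at h3 ⊢
    have h4 : -(⟪g, x - s⟫ + r x - r s) ≤ 1 / η * ⟪φ' s - φ' x, x - s⟫ := by
      refine le_trans (le_of_eq ?_) h1
      simp only [inner_sub_right]; ring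
    have h5 : ⟪φ' s - φ' x, x - s⟫ ≤ - (σω * N (x - s) ^ 2) := by
      simp only [inner_sub_left, inner_sub_right] at h2 h3 ⊢
      linarith
    have h6 : 1 / η * ⟪φ' s - φ' x, x - s⟫ ≤ 1 / η * (- (σω * N (x - s) ^ 2)) := by gcongr
    have h7 : 1 / η * (σω * N (x - s) ^ 2) ≤ (D + Gr) * N (x - s) := by linarith
    rw [one_div_mul_eq_div, div_le_iff₀ hη] at h7
    rw [le_div_iff₀ hσ]
    rcases (hN_nn (x - s)).eq_or_lt with h0 | h0
    · rw [← h0]; simp; positivity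
    · have : N (x - s) * (N (x - s) * σω) ≤ N (x - s) * (η * (D + Gr)) := by linarith
      exact le_of_mul_le_mul_left this h0
  refine ⟨?_, ?_⟩
  · have := hN_add (y - s) (s - x)
    rw [sub_add_sub_cancel] at this
    linarith
  · intro z hz
    have hzK := hCK (hCsub hz)
    have h1 := hopt z (hCsub hz)
    have h2 := hstrong s hsK x hxK
    rw [hsym] at h2
    have h3 := hstrong y hyK s hsK
    have h4 : ⟪φ' s - φ' y, z - y⟫ ≤ Rd * Gω * (√(2 / σω) * √(η * ρ)) := by
      have := hdual (φ' s - φ' y) (z - y)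
      have h5 := hφlip s hsK y hyK
      have h6 : N (s - y) = N (y - s) := by rw [← hN_neg]; simp
      rw [h6] at h5
      have h7 := hRd z hzK y hyK
      calc _ ≤ dualNorm d N (φ' s - φ' y) * N (z - y) := this
        _ ≤ (Gω * N (y - s)) * N (z - y) := by
          gcongr
          exact hN_nn _
        _ ≤ (Gω * (√(2 / σω) * √(η * ρ))) * Rd := by
          gcongr
          exact hN_nn _
        _ = _ := by ring
    have h5 : 1 / η * ⟪φ' s - φ' x, z - s⟫ ≤ 1 / η * (V z x - V z y - σω / 2 * N (x - s) ^ 2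
        + Rd * Gω * (√(2 / σω) * √(η * ρ))) := by
      gcongr
      rw [hV, hV]
      have h9 : 0 ≤ σω / 2 * N (y - s) ^ 2 := by positivity
      simp only [inner_sub_left, inner_sub_right] at h2 h3 h4 ⊢
      linarith
    have hsq : 1 / η * √(η * ρ) = √(ρ / η) := by
      rw [show ρ / η = (η * ρ) / η ^ 2 by field_simp, Real.sqrt_div (by positivity), Real.sqrt_sq hη.le]
      ring
    have h6 : (D + Gr) * N (x - s) ≤ η * (D + Gr) ^ 2 / (2 * σω) + 1 / η * (σω / 2 * N (x - s) ^ 2) := by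
      have : 0 ≤ (η * (D + Gr) - σω * N (x - s)) ^ 2 / (2 * σω * η) := by positivity
      have e : (η * (D + Gr) - σω * N (x - s)) ^ 2 / (2 * σω * η) = η * (D + Gr) ^ 2 / (2 * σω) + 1 / η * (σω / 2 * N (x - s) ^ 2) - (D + Gr) * N (x - s) := by
        field_simp; ring
      linarith
    have e2 : ⟪g, x - z⟫ + r x - r z = (⟪g, s - z⟫ + r s - r z) + (⟪g, x - s⟫ + r x - r s) := by
      simp only [inner_sub_right]; ring
    rw [e2, ← hsq]
    linarith

theorem aux_backProd_succ {m : ℕ} (W : ℕ → Matrix (Fin m) (Fin m) ℝ) (t τ : ℕ) (h : τ ≤ t + 1) :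
    backProd W (t + 1) τ = W (t + 1) * backProd W t τ := by
  unfold backProd
  have e : t + 1 + 1 - τ = (t + 1 - τ) + 1 := by omega
  rw [e, List.range_succ_eq_map]
  simp only [List.map_cons, List.prod_cons, List.map_map]
  congr 3
  ext k
  simp

theorem aux_backProd_self {m : ℕ} (W : ℕ → Matrix (Fin m) (Fin m) ℝ) (t : ℕ) :
    backProd W t (t + 1) = 1 := by
  simp [backProd]

theorem aux_geom (κ : ℝ) (ε : ℕ → ℝ) (n : ℕ) :
    (1 - κ) * ∑ t ∈ Finset.Icc 1 n, ∑ τ ∈ Finset.Icc 1 t, κ ^ (t - τ) * ε τ =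
      ∑ τ ∈ Finset.Icc 1 n, ε τ - κ * ∑ τ ∈ Finset.Icc 1 n, κ ^ (n - τ) * ε τ := by
  induction n with
  | zero => simp
  | succ n ih =>
    have hS : ∑ τ ∈ Finset.Icc 1 (n + 1), κ ^ (n + 1 - τ) * ε τ =
        κ * ∑ τ ∈ Finset.Icc 1 n, κ ^ (n - τ) * ε τ + ε (n + 1) := by
      rw [Finset.sum_Icc_succ_top (by omega), Finset.mul_sum]
      simp only [Nat.sub_self, pow_zero, one_mul]
      congr 1
      apply Finset.sum_congr rfl
      intro τ hτ
      have := (Finset.mem_Icc.mp hτ).2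
      rw [show n + 1 - τ = (n - τ) + 1 by omega, pow_succ]; ring
    rw [Finset.sum_Icc_succ_top (by omega), mul_add, ih, hS,
      Finset.sum_Icc_succ_top (b := n) (by omega) ε]
    ring

theorem aux_network {d m : ℕ} (T : ℕ) (N : Euc d → ℝ)
    (hN_add : ∀ x y, N (x + y) ≤ N x + N y)
    (hN_smul : ∀ (c : ℝ) (x : Euc d), N (c • x) = |c| * N x)
    (hN_nn : ∀ x, 0 ≤ N x)
    (W : ℕ → Matrix (Fin m) (Fin m) ℝ)
    (hW : ∀ t ∈ Finset.Icc 1 T, ∀ i, ∑ j, W t i j = 1)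
    (θ κ : ℝ) (hθ : 0 < θ) (hκ0 : 0 < κ) (hκ1 : κ < 1)
    (hP : ∀ τ t : ℕ, 1 ≤ τ → τ ≤ t → t ≤ T → ∀ i,
      ∑ j, |backProd W t τ i j - 1 / (m : ℝ)| ≤ θ * κ ^ (t - τ))
    (x y : ℕ → Fin m → Euc d) (x0 : Euc d) (hinit : ∀ i, x 1 i = x0)
    (hupdate : ∀ t ∈ Finset.Icc 1 T, ∀ i, x (t + 1) i = ∑ j, W t i j • y t j)
    (ε : ℕ → ℝ) (hε0 : ∀ t, 0 ≤ ε t)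
    (hε : ∀ t ∈ Finset.Icc 1 T, ∀ i, N (y t i - x t i) ≤ ε t) (i j : Fin m) :
    ∑ t ∈ Finset.Icc 1 T, N (x t j - x t i) ≤ 2 * θ / (1 - κ) * ∑ t ∈ Finset.Icc 1 T, ε t := by
  have N0 : N 0 = 0 := by simpa using hN_smul 0 0
  have hNsum : ∀ {ι : Type} (s : Finset ι) (f : ι → Euc d), N (∑ k ∈ s, f k) ≤ ∑ k ∈ s, N (f k) :=
    fun s f => Finset.le_sum_of_subadditive N N0.le hN_add s f
  have hrep : ∀ t, t ≤ T → ∀ i, x (t + 1) i =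
      x0 + ∑ τ ∈ Finset.Icc 1 t, ∑ k, backProd W t τ i k • (y τ k - x τ k) := by
    intro t
    induction t with
    | zero => intro _ i; simp [hinit]
    | succ t ih =>
      intro ht i
      have hmem : t + 1 ∈ Finset.Icc 1 T := Finset.mem_Icc.mpr ⟨by omega, ht⟩
      rw [hupdate (t + 1) hmem i]
      have e1 : ∀ k, W (t + 1) i k • y (t + 1) k = W (t + 1) i k • x0
          + W (t + 1) i k • (∑ τ ∈ Finset.Icc 1 t, ∑ l, backProd W t τ k l • (y τ l - x τ l))
          + W (t + 1) i k • (y (t + 1) k - x (t + 1) k) := by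
        intro k
        rw [← smul_add, ← smul_add, ← ih (by omega) k]; simp
      simp only [e1, Finset.sum_add_distrib, ← Finset.sum_smul, hW _ hmem i, one_smul]
      rw [Finset.sum_Icc_succ_top (by omega), add_assoc]
      congr 2
      · simp only [Finset.smul_sum]
        rw [Finset.sum_comm]
        apply Finset.sum_congr rfl
        intro τ hτ
        rw [Finset.sum_comm]
        apply Finset.sum_congr rfl
        intro l _
        have := (Finset.mem_Icc.mp hτ).2
        rw [aux_backProd_succ W t τ (by omega), Matrix.mul_apply, Finset.sum_smul]
        simp only [smul_smul]
      · rw [aux_backProd_succ W t (t + 1) le_rfl, aux_backProd_self, mul_one]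
  have hone : ∀ t, t ≤ T → N (x (t + 1) j - x (t + 1) i) ≤
      2 * θ * ∑ τ ∈ Finset.Icc 1 t, κ ^ (t - τ) * ε τ := by
    intro t ht
    rw [hrep t ht, hrep t ht, add_sub_add_left_eq_sub, ← Finset.sum_sub_distrib, Finset.mul_sum]
    refine (hNsum _ _).trans (Finset.sum_le_sum ?_)
    intro τ hτ
    obtain ⟨h1, h2⟩ := Finset.mem_Icc.mp hτ
    rw [← Finset.sum_sub_distrib]
    refine (hNsum _ _).trans ?_
    calc _ ≤ ∑ k, (|backProd W t τ j k - 1 / (m : ℝ)| + |backProd W t τ i k - 1 / (m : ℝ)|) * ε τ := by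
          apply Finset.sum_le_sum
          intro k _
          rw [← sub_smul, hN_smul]
          have h3 := hε τ (Finset.mem_Icc.mpr ⟨h1, by omega⟩) k
          have h4 : |backProd W t τ j k - backProd W t τ i k| ≤ |backProd W t τ j k - 1 / (m : ℝ)| + |backProd W t τ i k - 1 / (m : ℝ)| := by
            have := abs_sub (backProd W t τ j k - 1 / (m : ℝ)) (backProd W t τ i k - 1 / (m : ℝ))
            simpa using this
          gcongr
          exact hN_nn _
      _ ≤ (θ * κ ^ (t - τ) + θ * κ ^ (t - τ)) * ε τ := by
          rw [← Finset.sum_mul, Finset.sum_add_distrib]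
          have := hP τ t h1 h2 ht i
          have := hP τ t h1 h2 ht j
          have := hε0 τ
          gcongr
      _ = _ := by ring
  have h1κ : 0 < 1 - κ := by linarith
  cases T with
  | zero => simp
  | succ n =>
    have hstep : ∑ t ∈ Finset.Icc 1 (n + 1), N (x t j - x t i) = ∑ t ∈ Finset.Icc 1 n, N (x (t + 1) j - x (t + 1) i) := by
      have h0 : ∀ n : ℕ, ∑ t ∈ Finset.Icc 1 (n + 1), N (x t j - x t i) = ∑ t ∈ Finset.Icc 1 n, N (x (t + 1) j - x (t + 1) i) := by
        intro n
        induction n with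
        | zero => simp [hinit, N0]
        | succ n ih => rw [Finset.sum_Icc_succ_top (by omega), ih, Finset.sum_Icc_succ_top (b := n) (by omega)]
      exact h0 n
    rw [hstep]
    have hg := aux_geom κ ε n
    have hp : 0 ≤ κ * ∑ τ ∈ Finset.Icc 1 n, κ ^ (n - τ) * ε τ := by
      have : 0 ≤ ∑ τ ∈ Finset.Icc 1 n, κ ^ (n - τ) * ε τ :=
        Finset.sum_nonneg fun τ _ => mul_nonneg (by positivity) (hε0 τ)
      positivity
    have hb : ∑ t ∈ Finset.Icc 1 n, ∑ τ ∈ Finset.Icc 1 t, κ ^ (t - τ) * ε τ ≤ (∑ τ ∈ Finset.Icc 1 (n + 1), ε τ) / (1 - κ) := by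
      rw [le_div_iff₀ h1κ, Finset.sum_Icc_succ_top (b := n) (by omega)]
      have := hε0 (n + 1)
      linarith
    calc _ ≤ ∑ t ∈ Finset.Icc 1 n, 2 * θ * ∑ τ ∈ Finset.Icc 1 t, κ ^ (t - τ) * ε τ := by
          apply Finset.sum_le_sum
          intro t ht
          exact hone t (by have := (Finset.mem_Icc.mp ht).2; omega)
      _ = 2 * θ * ∑ t ∈ Finset.Icc 1 n, ∑ τ ∈ Finset.Icc 1 t, κ ^ (t - τ) * ε τ := by
          rw [Finset.mul_sum]
      _ ≤ 2 * θ * ((∑ τ ∈ Finset.Icc 1 (n + 1), ε τ) / (1 - κ)) := by gcongr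
      _ = _ := by ring

theorem aux_lip_closure {d : ℕ} (f : Euc d → ℝ) (hfc : Continuous f) (K : Set (Euc d)) (G : ℝ)
    (hlip : ∀ x ∈ K, ∀ y ∈ K, |f x - f y| ≤ G * ‖x - y‖) :
    ∀ x ∈ closure K, ∀ y ∈ closure K, |f x - f y| ≤ G * ‖x - y‖ := by
  have hcl : IsClosed {p : Euc d × Euc d | |f p.1 - f p.2| ≤ G * ‖p.1 - p.2‖} :=
    isClosed_le (by fun_prop) (by fun_prop)
  intro x hx y hy
  have : (x, y) ∈ closure (K ×ˢ K) := by rw [closure_prod_eq]; exact ⟨hx, hy⟩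
  exact closure_minimal (fun p hp => hlip p.1 hp.1 p.2 hp.2) hcl this

theorem aux_stoch {d : ℕ} (hd : 1 ≤ d) (μ : Measure (Euc d)) (hμ : IsProbabilityMeasure μ)
    (hμsphere : μ {v : Euc d | ‖v‖ = 1}ᶜ = 0)
    (hμinv : ∀ R : Euc d ≃ₗᵢ[ℝ] Euc d, μ.map (⇑R) = μ)
    (f : Euc d → ℝ) (hf : ConvexOn ℝ Set.univ f) (hfc : Continuous f)
    (K S : Set (Euc d)) (G δ Rb : ℝ) (hδ : 0 < δ) (hG : 0 ≤ G)
    (hlip : ∀ x ∈ K, ∀ y ∈ K, |f x - f y| ≤ G * ‖x - y‖)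
    (hS : IsClosed S) (hSK : ∀ x ∈ S, ∀ v : Euc d, ‖v‖ ≤ 1 → x + δ • v ∈ K)
    (hSb : ∀ x ∈ S, ‖x‖ ≤ Rb)
    {Ω : Type} [MeasurableSpace Ω] (P : Measure Ω) (hP : IsProbabilityMeasure P)
    (X U : Ω → Euc d) (hX : Measurable X) (hU : Measurable U)
    (hXU : ProbabilityTheory.IndepFun X U P) (hUlaw : P.map U = μ)
    (hXS : ∀ o, X o ∈ S) (z : Euc d) (hz : z ∈ S) :
    Integrable (fun o => f (X o) - f z -
      ⟪((d : ℝ) / (2 * δ) * (f (X o + δ • U o) - f (X o - δ • U o))) • U o, X o - z⟫) P ∧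
    ∫ o, (f (X o) - f z -
      ⟪((d : ℝ) / (2 * δ) * (f (X o + δ • U o) - f (X o - δ • U o))) • U o, X o - z⟫) ∂P
      ≤ 2 * δ * G := by
  set h : Euc d × Euc d → ℝ := fun p => f p.1 - f z -
      ⟪((d : ℝ) / (2 * δ) * (f (p.1 + δ • p.2) - f (p.1 - δ • p.2))) • p.2, p.1 - z⟫ with hh
  have hae : ∀ᵐ v ∂μ, ‖v‖ = 1 := hμsphere
  have hd0 : (0 : ℝ) < d := by exact_mod_cast hd
  have hSK0 : ∀ x ∈ S, x ∈ K := fun x hx => by simpa using hSK x hx 0 (by simp)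
  have hSKm : ∀ x ∈ S, ∀ v : Euc d, ‖v‖ ≤ 1 → x - δ • v ∈ K := by
    intro x hx v hv
    have := hSK x hx (-v) (by simpa using hv)
    simpa [sub_eq_add_neg] using this
  have hcont : Continuous h := by
    rw [hh]; fun_prop
  have hnx : ∀ x ∈ S, ‖x - z‖ ≤ 2 * Rb := by
    intro x hx
    have := norm_sub_le x z
    linarith [hSb x hx, hSb z hz]
  have hin : ∀ x ∈ S, ∀ v : Euc d, ‖v‖ = 1 →
      |⟪((d : ℝ) / (2 * δ) * (f (x + δ • v) - f (x - δ • v))) • v, x - z⟫| ≤ d * G * (2 * Rb) := by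
    intro x hx v hv
    refine (abs_real_inner_le_norm _ _).trans ?_
    have h1 := hlip _ (hSK x hx v hv.le) _ (hSKm x hx v hv.le)
    have e : x + δ • v - (x - δ • v) = (2 * δ) • v := by module
    rw [e, norm_smul, hv, Real.norm_eq_abs, abs_of_pos (show (0:ℝ) < 2 * δ by positivity), mul_one] at h1
    have h2 := hnx x hx
    rw [norm_smul, hv, mul_one, norm_mul, Real.norm_eq_abs, Real.norm_eq_abs, abs_of_pos (show (0:ℝ) < d / (2 * δ) by positivity)]
    calc _ ≤ (d / (2 * δ) * (G * (2 * δ))) * (2 * Rb) := by gcongr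
      _ = _ := by field_simp
  have hf0 : ∀ x ∈ S, |f x - f z| ≤ G * (2 * Rb) := by
    intro x hx
    refine (hlip x (hSK0 x hx) z (hSK0 z hz)).trans ?_
    have := hnx x hx
    gcongr
  have hUae : ∀ᵐ o ∂P, ‖U o‖ = 1 := by
    rw [← hUlaw] at hae
    exact ae_of_ae_map hU.aemeasurable hae
  have hint : Integrable (fun o => h (X o, U o)) P := by
    refine Integrable.of_bound (C := G * (2 * Rb) + d * G * (2 * Rb)) ?_ ?_
    · exact (hcont.measurable.comp (hX.prodMk hU)).aestronglyMeasurable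
    · filter_upwards [hUae] with o ho
      have h1 := hf0 _ (hXS o)
      have h2 := hin _ (hXS o) _ ho
      simp only [hh]
      exact (abs_sub _ _).trans (add_le_add h1 h2)
  refine ⟨hint, ?_⟩
  have hmap : P.map (fun o => (X o, U o)) = (P.map X).prod μ := by
    rw [← hUlaw]
    exact (ProbabilityTheory.indepFun_iff_map_prod_eq_prod_map_map hX.aemeasurable hU.aemeasurable).mp hXU
  have hPX : IsProbabilityMeasure (P.map X) := Measure.isProbabilityMeasure_map hX.aemeasurable
  have hint2 : Integrable h ((P.map X).prod μ) := by
    rw [← hmap]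
    exact (integrable_map_measure hcont.aestronglyMeasurable (hX.prodMk hU).aemeasurable).mpr hint
  have e1 : ∫ o, h (X o, U o) ∂P = ∫ a, ∫ b, h (a, b) ∂μ ∂(P.map X) := by
    rw [← integral_prod _ hint2, ← hmap, integral_map (hX.prodMk hU).aemeasurable hcont.aestronglyMeasurable]
  change ∫ o, h (X o, U o) ∂P ≤ _
  rw [e1]
  have hXae : ∀ᵐ a ∂(P.map X), a ∈ S := by
    rw [ae_map_iff (p := fun a => a ∈ S) hX.aemeasurable hS.measurableSet]
    exact Filter.Eventually.of_forall hXS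
  calc _ ≤ ∫ _a, 2 * δ * G ∂(P.map X) := by
        apply integral_mono_ae hint2.integral_prod_left (integrable_const _)
        filter_upwards [hXae] with a ha
        have hs := aux_smooth hd μ hμ hμsphere hμinv f hf hfc K G δ hδ hlip a z hG (hSK a ha) (hSK z hz)
        have hi : Integrable (fun v => ⟪((d : ℝ) / (2 * δ) * (f (a + δ • v) - f (a - δ • v))) • v, a - z⟫) μ := by
          refine Integrable.of_bound (C := d * G * (2 * Rb)) (by fun_prop) ?_
          filter_upwards [hae] with v hv using hin a ha v hv
        simp only [hh]
        rw [integral_sub (integrable_const _) hi]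
        simp only [integral_const, probReal_univ, one_smul]
        linarith
    _ = _ := by simp

/-- **Bandit online distributed composite mirror descent (Theorem 2).**
In the BanODCMD setting, for every node `j` and every comparator `x★ ∈ K`, the expected
average regularized regret is bounded by
`B₀/T + B₁/(ηT) + B₂η + (B₃/T) Σ_t √(ηρ_t) + (B₄/T) Σ_t √(ρ_t/η) + B₅δ + B₆ξ`. -/
theorem banodcmd_regret_bound
    (d m T : ℕ) (hd : 1 ≤ d) (hm : 1 ≤ m) (hT : 1 ≤ T)
    -- N is a norm on ℝ^d, comparable with the Euclidean norm
    (N : Euc d → ℝ)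
    (hN_add : ∀ x y, N (x + y) ≤ N x + N y)
    (hN_smul : ∀ (c : ℝ) (x : Euc d), N (c • x) = |c| * N x)
    (hN_pos : ∀ x : Euc d, x ≠ 0 → 0 < N x)
    (pb pbs : ℝ) (hpb : 0 < pb) (hpbs : 0 < pbs)
    (hNle : ∀ x : Euc d, N x ≤ pb * ‖x‖)
    (hNsle : ∀ x : Euc d, dualNorm d N x ≤ pbs * ‖x‖)
    -- K is convex, contains the ball of radius Rin and is contained in the ball Rb
    (K : Set (Euc d)) (hKconv : Convex ℝ K)
    (Rin Rb : ℝ) (hRin : 0 < Rin)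
    (hball : Metric.closedBall (0 : Euc d) Rin ⊆ K)
    (hKRb : K ⊆ Metric.closedBall (0 : Euc d) Rb)
    -- φ is differentiable with gradient φ', Bregman divergence V
    (φ : Euc d → ℝ) (φ' : Euc d → Euc d)
    (hgrad : ∀ x, HasGradientAt φ (φ' x) x)
    (V : Euc d → Euc d → ℝ)
    (hV : ∀ x y, V x y = φ x - φ y - ⟪φ' y, x - y⟫)
    -- φ is σ_ω-strongly convex w.r.t. N on K
    (σω : ℝ) (hσ : 0 < σω)
    (hstrong : ∀ x ∈ K, ∀ y ∈ K, φ x ≥ φ y + ⟪φ' y, x - y⟫ + σω / 2 * N (x - y) ^ 2)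
    -- ∇φ is G_ω-Lipschitz w.r.t. N on K
    (Gω : ℝ) (hGω : 0 ≤ Gω)
    (hφlip : ∀ x ∈ K, ∀ y ∈ K, dualNorm d N (φ' x - φ' y) ≤ Gω * N (x - y))
    -- V is convex in its second argument on K
    (hVconv : ∀ (n : ℕ) (α : Fin n → ℝ) (ys : Fin n → Euc d) (a : Euc d),
      a ∈ K → (∀ i, 0 ≤ α i) → ∑ i, α i = 1 → (∀ i, ys i ∈ K) →
      V a (∑ i, α i • ys i) ≤ ∑ i, α i * V a (ys i))
    -- loss functions and regularizer
    (ℓ : ℕ → Fin m → Euc d → ℝ) (r : Euc d → ℝ)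
    (Gℓ Gr : ℝ) (hGℓ : 0 ≤ Gℓ) (hGr : 0 ≤ Gr)
    (hℓconv : ∀ t ∈ Finset.Icc 1 T, ∀ i, ConvexOn ℝ Set.univ (ℓ t i))
    (hℓlipN : ∀ t ∈ Finset.Icc 1 T, ∀ i, ∀ x ∈ K, ∀ y ∈ K,
      |ℓ t i x - ℓ t i y| ≤ Gℓ * N (x - y))
    (hℓlip2 : ∀ t ∈ Finset.Icc 1 T, ∀ i, ∀ x ∈ K, ∀ y ∈ K,
      |ℓ t i x - ℓ t i y| ≤ Gℓ * ‖x - y‖)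
    (hrconv : ConvexOn ℝ Set.univ r)
    (hrlip : ∀ x ∈ K, ∀ y ∈ K, |r x - r y| ≤ Gr * N (x - y))
    -- algorithm parameters
    (η : ℝ) (hη : 0 < η) (ρ : ℕ → ℝ) (hρ : ∀ t, 0 ≤ ρ t)
    (ξ : ℝ) (hξ0 : 0 < ξ) (hξ1 : ξ < 1)
    (δ : ℝ) (hδ0 : 0 < δ) (hδ : δ ≤ ξ * Rin)
    -- W(1), …, W(T) are doubly stochastic with geometrically mixing backward products
    (W : ℕ → Matrix (Fin m) (Fin m) ℝ)
    (hW : ∀ t ∈ Finset.Icc 1 T,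
      (∀ i j, 0 ≤ W t i j) ∧ (∀ i, ∑ j, W t i j = 1) ∧ (∀ j, ∑ i, W t i j = 1))
    (θ κ : ℝ) (hθ : 0 < θ) (hκ0 : 0 < κ) (hκ1 : κ < 1)
    (hP : ∀ τ t : ℕ, 1 ≤ τ → τ ≤ t → t ≤ T → ∀ i,
      ∑ j, |backProd W t τ i j - 1 / (m : ℝ)| ≤ θ * κ ^ (t - τ))
    -- probabilistic setting
    (Ω : Type) [MeasureSpace Ω] (hprob : IsProbabilityMeasure (ℙ : Measure Ω))
    (u : ℕ → Fin m → Ω → Euc d)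
    (hu_meas : ∀ t i, Measurable (u t i))
    -- each u_{i,t} is uniformly distributed on the Euclidean unit sphere:
    -- its law is the rotation-invariant probability measure carried by the sphere
    (μunif : Measure (Euc d)) (hμprob : IsProbabilityMeasure μunif)
    (hμsphere : μunif {v : Euc d | ‖v‖ = 1}ᶜ = 0)
    (hμinv : ∀ R : Euc d ≃ₗᵢ[ℝ] Euc d, μunif.map (⇑R) = μunif)
    (hu_law : ∀ t ∈ Finset.Icc 1 T, ∀ i, Measure.map (u t i) ℙ = μunif)
    -- the filtration generated by the past draws
    (F : ℕ → MeasurableSpace Ω)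
    (hF : ∀ t, F t = ⨆ (j : Fin m) (s : ℕ) (_ : s < t),
      MeasurableSpace.comap (u s j) inferInstance)
    -- at each round the draws are mutually independent and independent of the past
    (hu_indep : ∀ t ∈ Finset.Icc 1 T,
      ProbabilityTheory.iIndepFun (fun i => u t i) ℙ)
    (hu_indepF : ∀ t ∈ Finset.Icc 1 T,
      ProbabilityTheory.Indep
        (⨆ i : Fin m, MeasurableSpace.comap (u t i) inferInstance) (F t) ℙ)
    -- iterates of the algorithm (pathwise)
    (x y : ℕ → Fin m → Ω → Euc d)
    (ghat : ℕ → Fin m → Ω → Euc d)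
    (hghat : ∀ t i ωp, ghat t i ωp =
      ((d : ℝ) / (2 * δ) *
        (ℓ t i (x t i ωp + δ • u t i ωp) - ℓ t i (x t i ωp - δ • u t i ωp))) • u t i ωp)
    -- common deterministic initialization: a minimizer of φ over (1-ξ)K
    (x0 : Euc d) (hx0K : x0 ∈ (1 - ξ) • K)
    (hx0min : ∀ z ∈ (1 - ξ) • K, φ x0 ≤ φ z)
    (hinit : ∀ i ωp, x 1 i ωp = x0)
    -- y_{i,t} is an ℱ_{t+1}-measurable ρ_t-approximate minimizer over (1-ξ)K
    (hy_meas : ∀ t ∈ Finset.Icc 1 T, ∀ i, Measurable[F (t + 1)] (y t i))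
    (hy_mem : ∀ t ∈ Finset.Icc 1 T, ∀ i ωp, y t i ωp ∈ (1 - ξ) • K)
    (hy_approx : ∀ t ∈ Finset.Icc 1 T, ∀ i ωp, ∀ z ∈ (1 - ξ) • K,
      ⟪ghat t i ωp, y t i ωp⟫ + r (y t i ωp) + 1 / η * V (y t i ωp) (x t i ωp) ≤
        ⟪ghat t i ωp, z⟫ + r z + 1 / η * V z (x t i ωp) + ρ t)
    (hupdate : ∀ t ∈ Finset.Icc 1 T, ∀ i ωp, x (t + 1) i ωp = ∑ j, W t i j • y t j ωp)
    -- the constants of the bound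
    (B0 B1 B2 B3 B4 B5 B6 : ℝ) (xstar : Euc d) (hxstar : xstar ∈ K)
    (hB0 : B0 = 2 * θ / (1 - κ) * (Gℓ + Gr) * ∑ _i : Fin m, N x0)
    (hB1 : B1 = ∑ _i : Fin m, V ((1 - ξ) • xstar) x0)
    (hB2 : B2 = (m : ℝ) / σω *
      ((pb * pbs * d * Gℓ) ^ 2 / 2 + Gr * (pb * pbs * d * Gℓ + Gr)
        + 2 * θ / (1 - κ) * (Gℓ + Gr) * (pb * pbs * d * Gℓ + Gr)))
    (hB3 : B3 = (m : ℝ) * Real.sqrt (2 / σω) *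
      (pb * pbs * d * Gℓ + 2 * θ / (1 - κ) * (Gℓ + Gr)))
    (hB4 : B4 = 4 * (m : ℝ) * Real.sqrt (2 / σω) * pb * Gω * Rb)
    (hB5 : B5 = 2 * (m : ℝ) * Gℓ)
    (hB6 : B6 = (m : ℝ) * pb * (Gℓ + Gr) * Rb) :
    ∀ j : Fin m,
      (∫ ωp, (1 / (T : ℝ) * ∑ t ∈ Finset.Icc 1 T, ∑ i,
          (ℓ t i (x t j ωp) + r (x t j ωp) - ℓ t i xstar - r xstar)) ∂ℙ) ≤
        B0 / T + B1 / (η * T) + B2 * η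
          + B3 / T * ∑ t ∈ Finset.Icc 1 T, Real.sqrt (η * ρ t)
          + B4 / T * ∑ t ∈ Finset.Icc 1 T, Real.sqrt (ρ t / η)
          + B5 * δ + B6 * ξ := by
  intro j
  -- basic facts
  have N0 : N 0 = 0 := by simpa using hN_smul 0 0
  have hN_nn : ∀ v, 0 ≤ N v := by
    intro v
    by_cases hv : v = 0
    · rw [hv, N0]
    · exact (hN_pos v hv).le
  have hN_neg : ∀ v, N (-v) = N v := by
    intro v
    have := hN_smul (-1) v
    simpa using this
  have hdual := aux_dual N hN_add hN_smul hN_pos pb hNle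
  have h0K : (0 : Euc d) ∈ K := hball (by simp [hRin.le])
  have hRb : 0 ≤ Rb := by simpa using hKRb h0K
  have hKn : ∀ v ∈ K, ‖v‖ ≤ Rb := fun v hv => by simpa using hKRb hv
  have hcKn : ∀ v ∈ closure K, ‖v‖ ≤ Rb := fun v hv => by
    simpa using closure_minimal hKRb Metric.isClosed_closedBall hv
  have h1ξ : 0 < 1 - ξ := by linarith
  set C : Set (Euc d) := (1 - ξ) • K with hC
  have hCconv : Convex ℝ C := hKconv.smul _
  have hclC : closure C = (1 - ξ) • closure K := closure_smul₀ _ _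
  have h0int : (0 : Euc d) ∈ interior K :=
    mem_interior_iff_mem_nhds.mpr (Filter.mem_of_superset (Metric.closedBall_mem_nhds 0 hRin) hball)
  have hCK : closure C ⊆ K := by
    rw [hclC]
    rintro _ ⟨k, hk, rfl⟩
    have := hKconv.combo_interior_closure_mem_interior h0int hk hξ0 h1ξ.le (by ring)
    simpa using interior_subset this
  have hCcl : C ⊆ closure C := subset_closure
  have hCc : IsCompact (closure C) := by
    refine Metric.isCompact_of_isClosed_isBounded isClosed_closure ?_
    exact (Metric.isBounded_closedBall.subset hKRb).subset hCK
  have hδball : ∀ v : Euc d, ‖v‖ ≤ 1 → ∃ b ∈ K, δ • v = ξ • b := by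
    intro v hv
    refine ⟨(δ / ξ) • v, hball ?_, ?_⟩
    · simp only [Metric.mem_closedBall, dist_zero_right, norm_smul, Real.norm_eq_abs]
      rw [abs_of_pos (by positivity)]
      calc δ / ξ * ‖v‖ ≤ δ / ξ * 1 := by gcongr
        _ ≤ Rin := by rw [mul_one, div_le_iff₀ hξ0]; linarith
    · rw [smul_smul]; congr 1; field_simp
  have hCδ : ∀ a ∈ C, ∀ v : Euc d, ‖v‖ ≤ 1 → a + δ • v ∈ K := by
    rintro _ ⟨k, hk, rfl⟩ v hv
    obtain ⟨b, hb, e⟩ := hδball v hv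
    rw [e]
    exact hKconv hk hb h1ξ.le hξ0.le (by ring)
  have hCδ' : ∀ a ∈ closure C, ∀ v : Euc d, ‖v‖ ≤ 1 → a + δ • v ∈ closure K := by
    rw [hclC]
    rintro _ ⟨k, hk, rfl⟩ v hv
    obtain ⟨b, hb, e⟩ := hδball v hv
    rw [e]
    exact hKconv.closure hk (subset_closure hb) h1ξ.le hξ0.le (by ring)
  set z : Euc d := (1 - ξ) • xstar with hz
  have hzC : z ∈ C := ⟨xstar, hxstar, rfl⟩
  have hzK : z ∈ K := hCK (hCcl hzC)
  set D : ℝ := pb * pbs * d * Gℓ with hDdef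
  have hd0 : (0 : ℝ) < d := by exact_mod_cast hd
  have hm0 : (0 : ℝ) < m := by exact_mod_cast hm
  have hT0 : (0 : ℝ) < T := by exact_mod_cast hT
  have hD : 0 ≤ D := by positivity
  have hRd : ∀ a ∈ K, ∀ b ∈ K, N (a - b) ≤ 2 * pb * Rb := by
    intro a ha b hb
    have h1 := norm_sub_le a b
    have h2 := hKn a ha
    have h3 := hKn b hb
    calc N (a - b) ≤ pb * ‖a - b‖ := hNle _
      _ ≤ pb * (Rb + Rb) := by gcongr; linarith
      _ = _ := by ring
  have hℓc : ∀ t ∈ Finset.Icc 1 T, ∀ i, Continuous (ℓ t i) := fun t ht i =>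
    (hℓconv t ht i).locallyLipschitz.continuous
  have hrc : Continuous r := hrconv.locallyLipschitz.continuous
  -- iterates stay in C
  have hxC1 : ∀ t, t ≤ T → ∀ i o, x (t + 1) i o ∈ C := by
    intro t ht i o
    rcases Nat.eq_zero_or_pos t with rfl | htp
    · rw [hinit]; exact hx0K
    · have htm : t ∈ Finset.Icc 1 T := Finset.mem_Icc.mpr ⟨htp, ht⟩
      rw [hupdate t htm]
      exact hCconv.sum_mem (fun k _ => (hW t htm).1 i k) ((hW t htm).2.1 i) (fun k _ => hy_mem t htm k o)
  have hxC : ∀ t ∈ Finset.Icc 1 T, ∀ i o, x t i o ∈ C := by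
    intro t ht i o
    obtain ⟨h1, h2⟩ := Finset.mem_Icc.mp ht
    have := hxC1 (t - 1) (by omega) i o
    rwa [Nat.sub_add_cancel h1] at this
  -- measurability
  have hFle : ∀ t, F t ≤ (inferInstance : MeasurableSpace Ω) := by
    intro t
    rw [hF]
    refine iSup_le fun k => iSup_le fun s => iSup_le fun _ => ?_
    exact (hu_meas s k).comap_le
  have hxF : ∀ t ∈ Finset.Icc 1 T, ∀ i, Measurable[F t] (x t i) := by
    intro t ht i
    obtain ⟨h1, h2⟩ := Finset.mem_Icc.mp ht
    obtain ⟨s, rfl⟩ : ∃ s, t = s + 1 := ⟨t - 1, by omega⟩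
    rcases Nat.eq_zero_or_pos s with rfl | hsp
    · have : x (0 + 1) i = fun _ => x0 := funext fun o => hinit i o
      rw [this]; exact measurable_const
    · have hsm : s ∈ Finset.Icc 1 T := Finset.mem_Icc.mpr ⟨hsp, by omega⟩
      have : x (s + 1) i = fun o => ∑ k, W s i k • y s k o := funext fun o => hupdate s hsm i o
      rw [this]
      exact Finset.measurable_fun_sum _ fun k _ => (measurable_const_smul (W s i k)).comp (hy_meas s hsm k)
  have hxM : ∀ t ∈ Finset.Icc 1 T, ∀ i, Measurable (x t i) := fun t ht i =>
    (hxF t ht i).mono (hFle t) le_rfl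
  have hindep : ∀ t ∈ Finset.Icc 1 T, ∀ i, ProbabilityTheory.IndepFun (x t i) (u t i) ℙ := by
    intro t ht i
    have h1 := hu_indepF t ht
    have h2 : ProbabilityTheory.IndepFun (u t i) (x t i) ℙ := by
      rw [ProbabilityTheory.IndepFun_iff_Indep]
      refine ProbabilityTheory.indep_of_indep_of_le h1 ?_ (hxF t ht i).comap_le
      exact le_iSup (fun i : Fin m => MeasurableSpace.comap (u t i) inferInstance) i
    exact h2.symm
  -- stochastic term
  set H : ℕ → Fin m → Ω → ℝ := fun t i o => ℓ t i (x t i o) - ℓ t i z - ⟪ghat t i o, x t i o - z⟫ with hH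
  have hHs : ∀ t ∈ Finset.Icc 1 T, ∀ i, Integrable (H t i) ℙ ∧ ∫ o, H t i o ∂ℙ ≤ 2 * δ * Gℓ := by
    intro t ht i
    have := aux_stoch hd μunif hμprob hμsphere hμinv (ℓ t i) (hℓconv t ht i) (hℓc t ht i)
      (closure K) (closure C) Gℓ δ Rb hδ0 hGℓ
      (aux_lip_closure _ (hℓc t ht i) K Gℓ (hℓlip2 t ht i)) isClosed_closure hCδ'
      (fun a ha => hKn a (hCK ha)) ℙ hprob (x t i) (u t i) (hxM t ht i) (hu_meas t i)
      (hindep t ht i) (hu_law t ht i) (fun o => hCcl (hxC t ht i o)) z (hCcl hzC)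
    simp only [hH, hghat]
    exact this
  have hsph : ∀ᵐ o ∂(ℙ : Measure Ω), ∀ t ∈ Finset.Icc 1 T, ∀ i, ‖u t i o‖ = 1 := by
    rw [ae_all_iff]; intro t
    rw [ae_all_iff]; intro ht
    rw [ae_all_iff]; intro i
    have hae : ∀ᵐ v ∂μunif, ‖v‖ = 1 := hμsphere
    rw [← hu_law t ht i] at hae
    exact ae_of_ae_map (hu_meas t i).aemeasurable hae
  set Φ : ℕ → Fin m → Ω → ℝ := fun t i o => ℓ t i (x t j o) + r (x t j o) - ℓ t i xstar - r xstar with hΦ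
  have hΦint : ∀ t ∈ Finset.Icc 1 T, ∀ i, Integrable (Φ t i) ℙ := by
    intro t ht i
    refine Integrable.of_bound (C := Gℓ * (2 * pb * Rb) + Gr * (2 * pb * Rb)) ?_ ?_
    · have hc : Continuous fun a => ℓ t i a + r a - ℓ t i xstar - r xstar := by
        have := hℓc t ht i
        fun_prop
      exact (hc.measurable.comp (hxM t ht j)).aestronglyMeasurable
    · refine Filter.Eventually.of_forall fun o => ?_
      have hxK := hCK (hCcl (hxC t ht j o))
      have h1 := hℓlipN t ht i _ hxK _ hxstar
      have h2 := hrlip _ hxK _ hxstar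
      have h3 := hRd _ hxK _ hxstar
      have h4 : Gℓ * N (x t j o - xstar) ≤ Gℓ * (2 * pb * Rb) := by gcongr
      have h5 : Gr * N (x t j o - xstar) ≤ Gr * (2 * pb * Rb) := by gcongr
      have e : Φ t i o = (ℓ t i (x t j o) - ℓ t i xstar) + (r (x t j o) - r xstar) := by
        simp only [hΦ]; ring
      rw [e, Real.norm_eq_abs]
      exact (abs_add_le _ _).trans (by linarith)
  set ε : ℕ → ℝ := fun t => √(2 / σω) * √(η * ρ t) + η * (D + Gr) / σω with hεdef
  have hε0 : ∀ t, 0 ≤ ε t := fun t => by simp only [hεdef]; positivity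
  set A1 : ℝ := η * (D + Gr) ^ 2 / (2 * σω) with hA1
  set Cst : ℝ := 1 / η * B1 + m * (T * A1 + (2 * pb * Rb) * Gω * √(2 / σω) * ∑ t ∈ Finset.Icc 1 T, √(ρ t / η))
    + m * ((Gℓ + Gr) * (2 * θ / (1 - κ) * ∑ t ∈ Finset.Icc 1 T, ε t))
    + m * (T * (ξ * pb * Rb * (Gℓ + Gr))) with hCst
  have hpath : ∀ᵐ o ∂(ℙ : Measure Ω), ∑ t ∈ Finset.Icc 1 T, ∑ i, Φ t i o ≤
      ∑ t ∈ Finset.Icc 1 T, ∑ i, H t i o + Cst := by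
    filter_upwards [hsph] with o ho
    have hgD : ∀ t ∈ Finset.Icc 1 T, ∀ i, dualNorm d N (ghat t i o) ≤ D := by
      intro t ht i
      have hu1 := ho t ht i
      have hp := hCδ _ (hxC t ht i o) (u t i o) hu1.le
      have hq : x t i o - δ • u t i o ∈ K := by
        have := hCδ _ (hxC t ht i o) (-u t i o) (by simp [hu1])
        simpa [sub_eq_add_neg] using this
      have h1 := hℓlipN t ht i _ hp _ hq
      have e : x t i o + δ • u t i o - (x t i o - δ • u t i o) = (2 * δ) • u t i o := by module
      rw [e, hN_smul, abs_of_pos (show (0:ℝ) < 2 * δ by positivity)] at h1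
      have h2 := hNle (u t i o)
      rw [hu1, mul_one] at h2
      refine (hNsle _).trans ?_
      rw [hghat, norm_smul, hu1, mul_one, norm_mul, Real.norm_eq_abs, Real.norm_eq_abs,
        abs_of_pos (show (0:ℝ) < d / (2 * δ) by positivity)]
      calc _ ≤ pbs * (d / (2 * δ) * (Gℓ * (2 * δ * pb))) := by
            gcongr
            exact h1.trans (by gcongr)
        _ = D := by rw [hDdef]; field_simp
    have hprox := fun t (ht : t ∈ Finset.Icc 1 T) i =>
      aux_prox N hN_add hN_neg hN_nn hdual K C hCconv hCK hCc φ φ' hgrad V hV σω hσ hstrong Gω hGω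
        hφlip r Gr hGr hrconv hrlip η hη (ρ t) (hρ t) D hD (2 * pb * Rb) hRd
        (ghat t i o) (x t i o) (y t i o) (hgD t ht i) (hxC t ht i o) (hy_mem t ht i o) (hy_approx t ht i o)
    have hnet := fun i => aux_network T N hN_add hN_smul hN_nn W (fun t ht => (hW t ht).2.1) θ κ hθ hκ0 hκ1 hP
      (fun t i => x t i o) (fun t i => y t i o) x0 (fun i => hinit i o)
      (fun t ht i => hupdate t ht i o) ε hε0 (fun t ht i => (hprox t ht i).1) i j
    -- telescoping
    have hVstep : ∀ t ∈ Finset.Icc 1 T, ∑ i, V z (x (t + 1) i o) ≤ ∑ i, V z (y t i o) := by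
      intro t ht
      calc _ ≤ ∑ i, ∑ k, W t i k * V z (y t k o) := by
            apply Finset.sum_le_sum
            intro i _
            rw [hupdate t ht]
            exact hVconv m (W t i) (fun k => y t k o) z hzK ((hW t ht).1 i) ((hW t ht).2.1 i)
              (fun k => hCK (hCcl (hy_mem t ht k o)))
        _ = _ := by
            rw [Finset.sum_comm]
            apply Finset.sum_congr rfl
            intro k _
            rw [← Finset.sum_mul, (hW t ht).2.2 k, one_mul]
    have htel : ∀ n, n ≤ T → ∑ t ∈ Finset.Icc 1 n, ∑ i, (V z (x t i o) - V z (y t i o)) ≤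
        B1 - ∑ i, V z (x (n + 1) i o) := by
      intro n
      induction n with
      | zero => intro _; simp [hinit, hB1]
      | succ n ih =>
        intro hn
        rw [Finset.sum_Icc_succ_top (by omega), Finset.sum_sub_distrib]
        have h1 := ih (by omega)
        have h2 := hVstep (n + 1) (Finset.mem_Icc.mpr ⟨by omega, hn⟩)
        linarith
    have hVnn : 0 ≤ ∑ i, V z (x (T + 1) i o) := by
      apply Finset.sum_nonneg
      intro i _
      have h1 := hstrong z hzK _ (hCK (hCcl (hxC1 T le_rfl i o)))
      have h2 : 0 ≤ σω / 2 * N (z - x (T + 1) i o) ^ 2 := by positivity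
      rw [hV]; linarith
    have hpt : ∀ t ∈ Finset.Icc 1 T, ∀ i, Φ t i o ≤ H t i o + 1 / η * (V z (x t i o) - V z (y t i o))
        + (A1 + 2 * pb * Rb * Gω * √(2 / σω) * √(ρ t / η)) + (Gℓ + Gr) * N (x t j o - x t i o)
        + ξ * pb * Rb * (Gℓ + Gr) := by
      intro t ht i
      have hxj := hCK (hCcl (hxC t ht j o))
      have hxi := hCK (hCcl (hxC t ht i o))
      have h1 := (hprox t ht i).2 z hzC
      have h2 := (abs_le.mp (hℓlipN t ht i _ hxj _ hxi)).2
      have h3 := (abs_le.mp (hrlip _ hxj _ hxi)).2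
      have h4 := (abs_le.mp (hℓlipN t ht i _ hzK _ hxstar)).2
      have h5 := (abs_le.mp (hrlip _ hzK _ hxstar)).2
      have h6 : N (z - xstar) ≤ ξ * pb * Rb := by
        have e : z - xstar = (-ξ) • xstar := by rw [hz]; module
        rw [e, hN_smul, abs_neg, abs_of_pos hξ0, mul_assoc]
        have := hNle xstar
        have := hKn xstar hxstar
        gcongr
        exact (hNle xstar).trans (by gcongr)
      have h7 : (Gℓ + Gr) * N (z - xstar) ≤ (Gℓ + Gr) * (ξ * pb * Rb) := by gcongr
      simp only [hΦ, hH]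
      linarith
    calc _ ≤ ∑ t ∈ Finset.Icc 1 T, ∑ i, (H t i o + 1 / η * (V z (x t i o) - V z (y t i o))
        + (A1 + 2 * pb * Rb * Gω * √(2 / σω) * √(ρ t / η)) + (Gℓ + Gr) * N (x t j o - x t i o)
        + ξ * pb * Rb * (Gℓ + Gr)) :=
          Finset.sum_le_sum fun t ht => Finset.sum_le_sum fun i _ => hpt t ht i
      _ = ∑ t ∈ Finset.Icc 1 T, ∑ i, H t i o
          + 1 / η * ∑ t ∈ Finset.Icc 1 T, ∑ i, (V z (x t i o) - V z (y t i o))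
          + m * (T * A1 + (2 * pb * Rb) * Gω * √(2 / σω) * ∑ t ∈ Finset.Icc 1 T, √(ρ t / η))
          + (Gℓ + Gr) * ∑ i, ∑ t ∈ Finset.Icc 1 T, N (x t j o - x t i o)
          + m * (T * (ξ * pb * Rb * (Gℓ + Gr))) := by
          rw [Finset.sum_comm (s := Finset.univ (α := Fin m))]
          simp only [Finset.sum_add_distrib, Finset.mul_sum, Finset.sum_const, Finset.card_univ,
            Fintype.card_fin, nsmul_eq_mul, Nat.card_Icc, Nat.add_sub_cancel]
          simp only [mul_add, Finset.mul_sum]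
          ring
      _ ≤ _ := by
          have h1 := htel T le_rfl
          have h2 : 1 / η * ∑ t ∈ Finset.Icc 1 T, ∑ i, (V z (x t i o) - V z (y t i o)) ≤ 1 / η * B1 := by
            gcongr; linarith
          have h3 : (Gℓ + Gr) * ∑ i, ∑ t ∈ Finset.Icc 1 T, N (x t j o - x t i o) ≤
              m * ((Gℓ + Gr) * (2 * θ / (1 - κ) * ∑ t ∈ Finset.Icc 1 T, ε t)) := by
            have h4 : ∑ i, ∑ t ∈ Finset.Icc 1 T, N (x t j o - x t i o) ≤
                ∑ _i : Fin m, (2 * θ / (1 - κ) * ∑ t ∈ Finset.Icc 1 T, ε t) :=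
              Finset.sum_le_sum fun i _ => hnet i
            rw [Finset.sum_const, Finset.card_univ, Fintype.card_fin, nsmul_eq_mul] at h4
            calc _ ≤ (Gℓ + Gr) * (m * (2 * θ / (1 - κ) * ∑ t ∈ Finset.Icc 1 T, ε t)) := by gcongr
              _ = _ := by ring
          rw [hCst]
          linarith
  -- expectation
  have hHI : Integrable (fun o => ∑ t ∈ Finset.Icc 1 T, ∑ i, H t i o) (ℙ : Measure Ω) :=
    integrable_finsetSum _ fun t ht => integrable_finsetSum _ fun i _ => (hHs t ht i).1
  have hΦI : Integrable (fun o => ∑ t ∈ Finset.Icc 1 T, ∑ i, Φ t i o) (ℙ : Measure Ω) :=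
    integrable_finsetSum _ fun t ht => integrable_finsetSum _ fun i _ => hΦint t ht i
  have hE : ∫ o, ∑ t ∈ Finset.Icc 1 T, ∑ i, Φ t i o ∂(ℙ : Measure Ω) ≤ T * (m * (2 * δ * Gℓ)) + Cst := by
    calc _ ≤ ∫ o, (∑ t ∈ Finset.Icc 1 T, ∑ i, H t i o + Cst) ∂(ℙ : Measure Ω) :=
          integral_mono_ae hΦI (hHI.add (integrable_const _)) hpath
      _ = ∑ t ∈ Finset.Icc 1 T, ∑ i, ∫ o, H t i o ∂(ℙ : Measure Ω) + Cst := by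
          rw [integral_add hHI (integrable_const _)]
          congr 1
          · rw [integral_finsetSum _ fun t ht => integrable_finsetSum _ fun i _ => (hHs t ht i).1]
            apply Finset.sum_congr rfl
            intro t ht
            rw [integral_finsetSum _ fun i _ => (hHs t ht i).1]
          · simp
      _ ≤ ∑ t ∈ Finset.Icc 1 T, ∑ _i : Fin m, (2 * δ * Gℓ) + Cst := by
          gcongr with t ht i _
          exact (hHs t ht i).2
      _ = _ := by simp
  rw [integral_const_mul]
  change 1 / (T : ℝ) * ∫ o, ∑ t ∈ Finset.Icc 1 T, ∑ i, Φ t i o ∂(ℙ : Measure Ω) ≤ _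
  have h1κ : 0 < 1 - κ := by linarith
  set S1 := ∑ t ∈ Finset.Icc 1 T, √(η * ρ t) with hS1
  set S2 := ∑ t ∈ Finset.Icc 1 T, √(ρ t / η) with hS2
  have hS1n : 0 ≤ S1 := Finset.sum_nonneg fun _ _ => Real.sqrt_nonneg _
  have hS2n : 0 ≤ S2 := Finset.sum_nonneg fun _ _ => Real.sqrt_nonneg _
  have hεsum : ∑ t ∈ Finset.Icc 1 T, ε t = √(2 / σω) * S1 + T * (η * (D + Gr) / σω) := by
    simp [hεdef, Finset.sum_add_distrib, hS1, Finset.mul_sum]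
  have hNx0 := hN_nn x0
  set q : ℝ := √(2 / σω) with hq
  have hqn : 0 ≤ q := Real.sqrt_nonneg _
  set Θ : ℝ := 2 * θ / (1 - κ) with hΘ
  have hΘn : 0 ≤ Θ := by positivity
  calc _ ≤ 1 / (T : ℝ) * (T * (m * (2 * δ * Gℓ)) + Cst) := by gcongr
    _ ≤ _ := by
      rw [hCst, hεsum, hA1, hB0, hB2, hB3, hB4, hB5, hB6]
      simp only [Finset.sum_const, Finset.card_univ, Fintype.card_fin, nsmul_eq_mul]
      have n0 : 0 ≤ Θ * (Gℓ + Gr) * (m * N x0) / T := by positivity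
      have n2 : 0 ≤ m / σω * (Gr ^ 2 / 2) * η := by positivity
      have n3 : 0 ≤ m * q * D / T * S1 := by positivity
      have n4 : 0 ≤ 2 * m * q * pb * Gω * Rb / T * S2 := by positivity
      rw [← sub_nonneg]
      have key := add_nonneg (add_nonneg (add_nonneg n0 n2) n3) n4
      refine key.trans (le_of_eq ?_)
      field_simp
      ring
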